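/- arXiv:2109.02709 — 2 statements merged into one kernel-verified Lean document; each statement's English description precedes it below -/
import Mathlib

section
/- Let μ be a Borel probability measure on [0,∞) which is not a Dirac mass, let φ be its cumulant function, set l := lim_{λ→∞} φ(λ) = −log μ({0}) ∈ (0,∞], and let Ψ : [0,l) → [0,∞) be the inverse of the strictly increasing function φ. Let p > 0. Then (Ψ^p)' > 0 on (0,l); Ψ^p is convex on (0,l) if, and only if, λ ↦ λ^{1−p} φ'(λ) is non-increasing on (0,∞), and Ψ^p is concave on (0,l) if, and only if, λ ↦ λ^{1−p} φ'(λ) is non-decreasing on (0,∞). In particular, if p ≥ 1 then Ψ^p is strictly convex on (0,l) and (Ψ^p)'(0+) = p·lim_{λ→0+} λ^{p−1}/φ'(λ) exists in [0,∞). -/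
open MeasureTheory Set Filter

section Cumulant

open ProbabilityTheory

variable {μ : Measure ℝ}

lemma ae_nonneg_of_measure_neg_eq_zero (hsupp : μ {x | x < 0} = 0) : ∀ᵐ x ∂μ, 0 ≤ x := by
  rw [ae_iff]
  simpa using hsupp

variable [IsProbabilityMeasure μ]

lemma eq_dirac_of_ae_eq_const {c : ℝ} (h : ∀ᵐ x ∂μ, x = c) : μ = Measure.dirac c := by
  have h1 : μ.map id = μ.map (fun _ => c) := Measure.map_congr h
  simpa [Measure.map_const] using h1

lemma integrable_exp_mul_of_nonpos (hsupp : μ {x | x < 0} = 0) {t : ℝ} (ht : t ≤ 0) :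
    Integrable (fun x => Real.exp (t * x)) μ := by
  refine Integrable.mono' (integrable_const (1 : ℝ)) (by fun_prop) ?_
  filter_upwards [ae_nonneg_of_measure_neg_eq_zero hsupp] with x hx
  rw [Real.norm_of_nonneg (Real.exp_pos _).le]
  exact Real.exp_le_one_iff.2 (mul_nonpos_of_nonpos_of_nonneg ht hx)

lemma mem_interior_integrableExpSet_of_neg (hsupp : μ {x | x < 0} = 0) {t : ℝ} (ht : t < 0) :
    t ∈ interior (integrableExpSet (fun x : ℝ => x) μ) :=
  mem_interior.2 ⟨Iio 0, fun _ hs => integrable_exp_mul_of_nonpos hsupp (le_of_lt hs),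
    isOpen_Iio, ht⟩

lemma deriv_cgf_pos_of_neg (hsupp : μ {x | x < 0} = 0)
    (hnotdirac : ∀ c : ℝ, μ ≠ Measure.dirac c) {t : ℝ} (ht : t < 0) :
    0 < deriv (cgf (fun x : ℝ => x) μ) t := by
  have hmem := mem_interior_integrableExpSet_of_neg hsupp ht
  have hint := integrable_exp_mul_of_nonpos hsupp ht.le
  have hnonneg : 0 ≤ᵐ[μ.tilted (fun x => t * x)] fun x : ℝ => x :=
    (tilted_absolutelyContinuous μ _).ae_le (ae_nonneg_of_measure_neg_eq_zero hsupp)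
  rw [← integral_tilted_mul_self hmem]
  refine lt_of_le_of_ne (integral_nonneg_of_ae hnonneg) fun h => ?_
  have hi : Integrable (fun x : ℝ => x) (μ.tilted (fun x => t * x)) := by
    have := memLp_tilted_mul hmem 1
    exact memLp_one_iff_integrable.1 (by simpa using this)
  have hz := (integral_eq_zero_iff_of_nonneg_ae hnonneg hi).1 h.symm
  exact hnotdirac 0 (eq_dirac_of_ae_eq_const ((absolutelyContinuous_tilted hint).ae_le hz))

lemma deriv_deriv_cgf_pos_of_neg (hsupp : μ {x | x < 0} = 0)
    (hnotdirac : ∀ c : ℝ, μ ≠ Measure.dirac c) {t : ℝ} (ht : t < 0) :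
    0 < deriv (deriv (cgf (fun x : ℝ => x) μ)) t := by
  have hmem := mem_interior_integrableExpSet_of_neg hsupp ht
  have hint := integrable_exp_mul_of_nonpos hsupp ht.le
  have hprob : IsProbabilityMeasure (μ.tilted (fun x => t * x)) := isProbabilityMeasure_tilted hint
  have hvar := variance_tilted_mul hmem
  rw [iteratedDeriv_succ, iteratedDeriv_one] at hvar
  rw [← hvar]
  refine lt_of_le_of_ne (variance_nonneg _ _) fun h => ?_
  have hL : MemLp (fun x : ℝ => x) 2 (μ.tilted (fun x => t * x)) := by
    simpa using memLp_tilted_mul hmem 2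
  have hev : evariance (fun x : ℝ => x) (μ.tilted (fun x => t * x)) = 0 := by
    rw [← hL.ofReal_variance_eq, ← h, ENNReal.ofReal_zero]
  have hz := (evariance_eq_zero_iff (by fun_prop)).1 hev
  exact hnotdirac _ (eq_dirac_of_ae_eq_const ((absolutelyContinuous_tilted hint).ae_le hz))

lemma strictMonoOn_deriv_cgf_Iio (hsupp : μ {x | x < 0} = 0)
    (hnotdirac : ∀ c : ℝ, μ ≠ Measure.dirac c) :
    StrictMonoOn (deriv (cgf (fun x : ℝ => x) μ)) (Iio 0) := by
  refine strictMonoOn_of_deriv_pos (convex_Iio 0) (fun t ht => ?_) fun t ht => ?_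
  · exact (analyticAt_cgf (mem_interior_integrableExpSet_of_neg hsupp ht)).deriv
      |>.continuousAt.continuousWithinAt
  · rw [interior_Iio] at ht
    exact deriv_deriv_cgf_pos_of_neg hsupp hnotdirac ht

lemma continuousOn_cumulant (hsupp : μ {x | x < 0} = 0) :
    ContinuousOn (fun l : ℝ => -Real.log (∫ x, Real.exp (-l * x) ∂μ)) (Ici 0) := by
  refine (ContinuousOn.log ?_ fun l hl => ?_).neg
  · refine continuousOn_of_dominated (bound := fun _ => (1 : ℝ)) (fun l _ => by fun_prop)
      (fun l hl => ?_) (integrable_const _) (ae_of_all _ fun x => by fun_prop)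
    filter_upwards [ae_nonneg_of_measure_neg_eq_zero hsupp] with x hx
    rw [Real.norm_of_nonneg (Real.exp_pos _).le]
    exact Real.exp_le_one_iff.2
      (mul_nonpos_of_nonpos_of_nonneg (neg_nonpos.2 hl) hx)
  · exact (integral_exp_pos
      (integrable_exp_mul_of_nonpos hsupp (neg_nonpos.2 hl))).ne'

end Cumulant

section InversePower

variable {φ Ψ : ℝ → ℝ} {p : ℝ}

lemma strictMonoOn_Ici_of_deriv_pos (hc : ContinuousOn φ (Ici 0))
    (hpos : ∀ l ∈ Ioi (0 : ℝ), 0 < deriv φ l) : StrictMonoOn φ (Ici 0) :=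
  strictMonoOn_of_deriv_pos (convex_Ici 0) hc (by simpa using hpos)

lemma isOpen_image_Ioi_of_strictMonoOn (hc : ContinuousOn φ (Ici 0))
    (hm : StrictMonoOn φ (Ici 0)) : IsOpen (φ '' Ioi 0) := by
  rw [isOpen_iff_mem_nhds]
  rintro _ ⟨l, hl, rfl⟩
  have hl : 0 < l := hl
  have hsub : Icc (l / 2) (2 * l) ⊆ Ici 0 := fun x hx => by
    have := hx.1
    simp only [mem_Ici]
    linarith
  refine mem_of_superset (Ioo_mem_nhds (hm (by simp; linarith) (by simp; linarith) (by linarith :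
      l / 2 < l)) (hm (by simp; linarith) (by simp; linarith) (by linarith : l < 2 * l)))
    ((intermediate_value_Ioo (by linarith) (hc.mono hsub)).trans ?_)
  refine image_mono fun x hx => ?_
  have := hx.1
  simp only [mem_Ioi]
  linarith

lemma convex_image_Ioi (hc : ContinuousOn φ (Ici 0)) : Convex ℝ (φ '' Ioi 0) :=
  (isPreconnected_Ioi.image φ (hc.mono Ioi_subset_Ici_self)).ordConnected.convex

lemma hasDerivAt_leftInverse_rpow (hc : ContinuousOn φ (Ici 0))
    (hpos : ∀ l ∈ Ioi (0 : ℝ), 0 < deriv φ l) (hΨ : InvOn Ψ φ (Ici 0) (φ '' Ici 0))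
    {l : ℝ} (hl : 0 < l) :
    HasDerivAt (fun y => Ψ y ^ p) (p * (l ^ (p - 1) / deriv φ l)) (φ l) := by
  have hm := strictMonoOn_Ici_of_deriv_pos hc hpos
  have hopen := isOpen_image_Ioi_of_strictMonoOn hc hm
  have hnhds : φ '' Ioi 0 ∈ nhds (φ l) := hopen.mem_nhds (mem_image_of_mem φ hl)
  have hinv : ∀ l ∈ Ioi (0 : ℝ), Ψ (φ l) = l := fun l hl => hΨ.1 (Ioi_subset_Ici_self hl)
  have hΨmono : StrictMonoOn Ψ (φ '' Ioi 0) := by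
    rintro _ ⟨a, ha, rfl⟩ _ ⟨b, hb, rfl⟩ hab
    rw [hinv a ha, hinv b hb]
    exact (hm.lt_iff_lt (Ioi_subset_Ici_self ha) (Ioi_subset_Ici_self hb)).1 hab
  have hΨimage : Ψ '' (φ '' Ioi 0) = Ioi 0 := by
    rw [image_image]
    exact (image_congr hinv).trans (image_id' _)
  have hΨcont : ContinuousAt Ψ (φ l) := by
    refine hΨmono.continuousAt_of_image_mem_nhds hnhds ?_
    rw [hΨimage, hinv l hl]
    exact Ioi_mem_nhds hl
  have hφ : HasDerivAt φ (deriv φ l) (Ψ (φ l)) := by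
    rw [hinv l hl]
    exact (differentiableAt_of_deriv_ne_zero (hpos l hl).ne').hasDerivAt
  have hd := hφ.of_local_left_inverse hΨcont (hpos l hl).ne' (by
    filter_upwards [hnhds] with y hy
    exact hΨ.2 (image_mono Ioi_subset_Ici_self hy))
  have hr := hd.rpow_const (p := p) (Or.inl (by rw [hinv l hl]; exact hl.ne'))
  rw [hinv l hl] at hr
  convert hr using 1
  rw [div_eq_mul_inv]
  ring

lemma tendsto_leftInverse_nhdsGT_zero (hc : ContinuousOn φ (Ici 0)) (h0 : φ 0 = 0)
    (hm : StrictMonoOn φ (Ici 0)) (hΨ : InvOn Ψ φ (Ici 0) (φ '' Ici 0)) :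
    Tendsto Ψ (nhdsWithin 0 (Ioi 0)) (nhdsWithin 0 (Ioi 0)) := by
  rw [(nhdsGT_basis (0 : ℝ)).tendsto_right_iff]
  intro ε hε
  have hφε : 0 < φ ε := h0 ▸ hm self_mem_Ici hε.le hε
  filter_upwards [Ioo_mem_nhdsGT hφε] with y hy
  rw [← h0] at hy
  obtain ⟨l, hl, rfl⟩ := intermediate_value_Ioo hε.le (hc.mono Icc_subset_Ici_self) hy
  rw [hΨ.1 (mem_Ici.2 hl.1.le)]
  exact hl

lemma rpow_div_eq_inv_rpow_mul {l d : ℝ} (hl : 0 < l) :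
    l ^ (p - 1) / d = (l ^ (1 - p) * d)⁻¹ := by
  rw [mul_inv, ← Real.rpow_neg hl.le, neg_sub, div_eq_mul_inv]

lemma deriv_leftInverse_rpow_le_iff (hc : ContinuousOn φ (Ici 0))
    (hpos : ∀ l ∈ Ioi (0 : ℝ), 0 < deriv φ l) (hΨ : InvOn Ψ φ (Ici 0) (φ '' Ici 0))
    (hp : 0 < p) {a b : ℝ} (ha : 0 < a) (hb : 0 < b) :
    deriv (fun y => Ψ y ^ p) (φ a) ≤ deriv (fun y => Ψ y ^ p) (φ b) ↔
      b ^ (1 - p) * deriv φ b ≤ a ^ (1 - p) * deriv φ a := by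
  rw [(hasDerivAt_leftInverse_rpow hc hpos hΨ ha).deriv,
    (hasDerivAt_leftInverse_rpow hc hpos hΨ hb).deriv, mul_le_mul_iff_right₀ hp,
    rpow_div_eq_inv_rpow_mul ha, rpow_div_eq_inv_rpow_mul hb]
  exact inv_le_inv₀ (mul_pos (Real.rpow_pos_of_pos ha _) (hpos a ha))
    (mul_pos (Real.rpow_pos_of_pos hb _) (hpos b hb))

lemma convexOn_leftInverse_rpow_iff (hc : ContinuousOn φ (Ici 0))
    (hpos : ∀ l ∈ Ioi (0 : ℝ), 0 < deriv φ l) (hΨ : InvOn Ψ φ (Ici 0) (φ '' Ici 0))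
    (hp : 0 < p) :
    ConvexOn ℝ (φ '' Ioi 0) (fun y => Ψ y ^ p) ↔
      AntitoneOn (fun l => l ^ (1 - p) * deriv φ l) (Ioi 0) := by
  have hm := strictMonoOn_Ici_of_deriv_pos hc hpos
  have hopen := isOpen_image_Ioi_of_strictMonoOn hc hm
  have hdiff : ∀ y ∈ φ '' Ioi 0, DifferentiableAt ℝ (fun y => Ψ y ^ p) y := by
    rintro _ ⟨l, hl, rfl⟩
    exact (hasDerivAt_leftInverse_rpow hc hpos hΨ hl).differentiableAt
  constructor
  · intro h a ha b hb hab
    exact (deriv_leftInverse_rpow_le_iff hc hpos hΨ hp ha hb).1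
      (h.monotoneOn_deriv hdiff (mem_image_of_mem φ ha)
        (mem_image_of_mem φ hb) (hm.monotoneOn (mem_Ici_of_Ioi ha) (mem_Ici_of_Ioi hb) hab))
  · intro h
    refine MonotoneOn.convexOn_of_deriv (convex_image_Ioi hc)
      (fun y hy => (hdiff y hy).continuousAt.continuousWithinAt)
      (fun y hy => (hdiff y (interior_subset hy)).differentiableWithinAt) ?_
    rw [hopen.interior_eq]
    rintro _ ⟨a, ha, rfl⟩ _ ⟨b, hb, rfl⟩ hab
    exact (deriv_leftInverse_rpow_le_iff hc hpos hΨ hp ha hb).2 (h ha hb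
      ((hm.le_iff_le (mem_Ici_of_Ioi ha) (mem_Ici_of_Ioi hb)).1 hab))

lemma concaveOn_leftInverse_rpow_iff (hc : ContinuousOn φ (Ici 0))
    (hpos : ∀ l ∈ Ioi (0 : ℝ), 0 < deriv φ l) (hΨ : InvOn Ψ φ (Ici 0) (φ '' Ici 0))
    (hp : 0 < p) :
    ConcaveOn ℝ (φ '' Ioi 0) (fun y => Ψ y ^ p) ↔
      MonotoneOn (fun l => l ^ (1 - p) * deriv φ l) (Ioi 0) := by
  have hm := strictMonoOn_Ici_of_deriv_pos hc hpos
  have hopen := isOpen_image_Ioi_of_strictMonoOn hc hm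
  have hdiff : ∀ y ∈ φ '' Ioi 0, DifferentiableAt ℝ (fun y => Ψ y ^ p) y := by
    rintro _ ⟨l, hl, rfl⟩
    exact (hasDerivAt_leftInverse_rpow hc hpos hΨ hl).differentiableAt
  constructor
  · intro h a ha b hb hab
    exact (deriv_leftInverse_rpow_le_iff hc hpos hΨ hp hb ha).1
      (h.antitoneOn_deriv hdiff (mem_image_of_mem φ ha)
        (mem_image_of_mem φ hb) (hm.monotoneOn (mem_Ici_of_Ioi ha) (mem_Ici_of_Ioi hb) hab))
  · intro h
    refine AntitoneOn.concaveOn_of_deriv (convex_image_Ioi hc)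
      (fun y hy => (hdiff y hy).continuousAt.continuousWithinAt)
      (fun y hy => (hdiff y (interior_subset hy)).differentiableWithinAt) ?_
    rw [hopen.interior_eq]
    rintro _ ⟨a, ha, rfl⟩ _ ⟨b, hb, rfl⟩ hab
    exact (deriv_leftInverse_rpow_le_iff hc hpos hΨ hp hb ha).2 (h ha hb
      ((hm.le_iff_le (mem_Ici_of_Ioi ha) (mem_Ici_of_Ioi hb)).1 hab))

lemma strictMonoOn_mul_rpow_div_deriv (hpos : ∀ l ∈ Ioi (0 : ℝ), 0 < deriv φ l)
    (hanti : StrictAntiOn (deriv φ) (Ioi 0)) (hp : 1 ≤ p) :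
    StrictMonoOn (fun l => p * (l ^ (p - 1) / deriv φ l)) (Ioi 0) := by
  intro a ha b hb hab
  have hp0 : 0 < p := by linarith
  refine mul_lt_mul_of_pos_left ?_ hp0
  exact div_lt_div₀' (Real.rpow_le_rpow (le_of_lt ha) hab.le (by linarith)) (hanti ha hb hab)
    (Real.rpow_pos_of_pos hb _) (hpos b hb)

lemma strictConvexOn_leftInverse_rpow (hc : ContinuousOn φ (Ici 0))
    (hpos : ∀ l ∈ Ioi (0 : ℝ), 0 < deriv φ l) (hanti : StrictAntiOn (deriv φ) (Ioi 0))
    (hΨ : InvOn Ψ φ (Ici 0) (φ '' Ici 0)) (hp : 1 ≤ p) :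
    StrictConvexOn ℝ (φ '' Ioi 0) (fun y => Ψ y ^ p) := by
  have hm := strictMonoOn_Ici_of_deriv_pos hc hpos
  have hd := fun l (hl : l ∈ Ioi (0 : ℝ)) => hasDerivAt_leftInverse_rpow (p := p) hc hpos hΨ hl
  refine StrictMonoOn.strictConvexOn_of_deriv (convex_image_Ioi hc) ?_ ?_
  · rintro _ ⟨l, hl, rfl⟩
    exact (hd l hl).continuousAt.continuousWithinAt
  · rw [(isOpen_image_Ioi_of_strictMonoOn hc hm).interior_eq]
    rintro _ ⟨a, ha, rfl⟩ _ ⟨b, hb, rfl⟩ hab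
    rw [(hd a ha).deriv, (hd b hb).deriv]
    exact strictMonoOn_mul_rpow_div_deriv hpos hanti hp ha hb
      ((hm.lt_iff_lt (mem_Ici_of_Ioi ha) (mem_Ici_of_Ioi hb)).1 hab)

lemma exists_tendsto_deriv_leftInverse_rpow (hc : ContinuousOn φ (Ici 0)) (h0 : φ 0 = 0)
    (hpos : ∀ l ∈ Ioi (0 : ℝ), 0 < deriv φ l) (hanti : StrictAntiOn (deriv φ) (Ioi 0))
    (hΨ : InvOn Ψ φ (Ici 0) (φ '' Ici 0)) (hp : 1 ≤ p) :
    ∃ L : ℝ, 0 ≤ L ∧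
      Tendsto (deriv (fun y => Ψ y ^ p)) (nhdsWithin 0 (Ioi 0)) (nhds L) ∧
      Tendsto (fun l => p * (l ^ (p - 1) / deriv φ l)) (nhdsWithin 0 (Ioi 0)) (nhds L) := by
  have hm := strictMonoOn_Ici_of_deriv_pos hc hpos
  have hnonneg : ∀ l ∈ Ioi (0 : ℝ), 0 ≤ p * (l ^ (p - 1) / deriv φ l) := fun l hl =>
    mul_nonneg (by linarith) (div_nonneg (Real.rpow_nonneg (le_of_lt hl) _) (hpos l hl).le)
  have hlim := (strictMonoOn_mul_rpow_div_deriv hpos hanti hp).monotoneOn.tendsto_nhdsGT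
    ⟨0, by rintro _ ⟨l, hl, rfl⟩; exact hnonneg l hl⟩
  refine ⟨_, ge_of_tendsto hlim ?_, ?_, hlim⟩
  · filter_upwards [self_mem_nhdsWithin] with l hl using hnonneg l hl
  · refine (hlim.comp (tendsto_leftInverse_nhdsGT_zero hc h0 hm hΨ)).congr' ?_
    have hφ1 : 0 < φ 1 := h0 ▸ hm self_mem_Ici (mem_Ici.2 zero_le_one) zero_lt_one
    filter_upwards [Ioo_mem_nhdsGT hφ1] with y hy
    rw [← h0] at hy
    obtain ⟨l, hl, rfl⟩ :=
      intermediate_value_Ioo zero_le_one (hc.mono Icc_subset_Ici_self) hy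
    rw [(hasDerivAt_leftInverse_rpow hc hpos hΨ hl.1).deriv, Function.comp_apply,
      hΨ.1 (mem_Ici.2 hl.1.le)]

end InversePower

/-- Let `μ` be a non-Dirac Borel probability measure on `[0,∞)` with cumulant
function `φ` (a strictly increasing bijection from `[0,∞)` onto `[0, l)`, `l = −log μ({0})`),
and let `Ψ` be the inverse of `φ` (so `Ψ` is defined on the image `φ([0,∞)) = [0, l)`).
Let `p > 0`. Then `(Ψ^p)' > 0` on `(0,l) = φ((0,∞))`; `Ψ^p` is convex on `(0,l)` iff
`λ ↦ λ^{1−p} φ'(λ)` is non-increasing on `(0,∞)`, and `Ψ^p` is concave on `(0,l)` iff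
`λ ↦ λ^{1−p} φ'(λ)` is non-decreasing on `(0,∞)`. In particular, if `p ≥ 1` then `Ψ^p` is
strictly convex on `(0,l)` and `(Ψ^p)'(0+) = p · lim_{λ→0+} λ^{p−1}/φ'(λ)` exists in `[0,∞)`. -/
theorem stmt_18 (μ : Measure ℝ) [IsProbabilityMeasure μ]
    (hsupp : μ {x | x < 0} = 0) (hnotdirac : ∀ c : ℝ, μ ≠ Measure.dirac c)
    (φ : ℝ → ℝ) (hφ : ∀ l : ℝ, φ l = -Real.log (∫ x, Real.exp (-l * x) ∂μ))
    (Ψ : ℝ → ℝ) (hΨ : Set.InvOn Ψ φ (Ici 0) (φ '' (Ici 0)))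
    (p : ℝ) (hp : 0 < p) :
    (∀ x ∈ φ '' (Ioi 0), 0 < deriv (fun y => Ψ y ^ p) x) ∧
    (ConvexOn ℝ (φ '' (Ioi 0)) (fun y => Ψ y ^ p) ↔
      AntitoneOn (fun l => l ^ (1 - p) * deriv φ l) (Ioi 0)) ∧
    (ConcaveOn ℝ (φ '' (Ioi 0)) (fun y => Ψ y ^ p) ↔
      MonotoneOn (fun l => l ^ (1 - p) * deriv φ l) (Ioi 0)) ∧
    (1 ≤ p →
      StrictConvexOn ℝ (φ '' (Ioi 0)) (fun y => Ψ y ^ p) ∧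
      ∃ L : ℝ, 0 ≤ L ∧
        Tendsto (deriv (fun y => Ψ y ^ p)) (nhdsWithin 0 (Ioi 0)) (nhds L) ∧
        Tendsto (fun l => p * (l ^ (p - 1) / deriv φ l)) (nhdsWithin 0 (Ioi 0)) (nhds L)) := by
  obtain rfl : φ = fun l => -Real.log (∫ x, Real.exp (-l * x) ∂μ) := funext hφ
  set φ : ℝ → ℝ := fun l => -Real.log (∫ x, Real.exp (-l * x) ∂μ) with hφdef
  have hc : ContinuousOn φ (Ici 0) := continuousOn_cumulant hsupp
  have h0 : φ 0 = 0 := by simp [hφdef]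
  have hderiv : ∀ l, deriv φ l = deriv (ProbabilityTheory.cgf (fun x : ℝ => x) μ) (-l) := by
    intro l
    have hcgf : φ = fun l => -ProbabilityTheory.cgf (fun x : ℝ => x) μ (-l) := rfl
    rw [hcgf, deriv.fun_neg, deriv_comp_neg, neg_neg]
  have hpos : ∀ l ∈ Ioi (0 : ℝ), 0 < deriv φ l := fun l hl => by
    rw [hderiv]
    exact deriv_cgf_pos_of_neg hsupp hnotdirac (neg_lt_zero.2 hl)
  have hanti : StrictAntiOn (deriv φ) (Ioi 0) := fun a ha b hb hab => by
    rw [hderiv, hderiv]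
    exact strictMonoOn_deriv_cgf_Iio hsupp hnotdirac (mem_Iio.2 (neg_lt_zero.2 hb))
      (mem_Iio.2 (neg_lt_zero.2 ha)) (neg_lt_neg hab)
  refine ⟨?_, convexOn_leftInverse_rpow_iff hc hpos hΨ hp,
    concaveOn_leftInverse_rpow_iff hc hpos hΨ hp, fun hp1 =>
      ⟨strictConvexOn_leftInverse_rpow hc hpos hanti hΨ hp1,
        exists_tendsto_deriv_leftInverse_rpow hc h0 hpos hanti hΨ hp1⟩⟩
  rintro _ ⟨l, hl, rfl⟩
  rw [(hasDerivAt_leftInverse_rpow hc hpos hΨ hl).deriv]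
  exact mul_pos hp (div_pos (Real.rpow_pos_of_pos hl _) (hpos l hl))
end

section
/- Let φ : [0,∞) → [0,∞) be a strictly increasing bijection, differentiable on (0,∞), with φ(0) = 0, and let Ψ be its inverse. Let μ be a Borel probability measure on (0,∞) such that ∫_{(0,∞)} e^{−λx} μ(dx) = e^{−φ(λ)} for all λ ≥ 0. Then for every p > −1 such that x ↦ e^{−x} Ψ(x)^p is integrable on (0,∞), one has ∫_{(0,∞)} x^{−p} μ(dx) = (1/Γ(p+1)) ∫₀^∞ e^{−x} Ψ(x)^p dx. -/
open MeasureTheory Set Filter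

/-- Integrating `x e^{-λx} λ^p` in `λ` over `(0,∞)` gives `Γ(p+1) x^{-p}`. -/
lemma lintegral_rpow_mul_mul_exp_neg_mul {p x : ℝ} (hp : -1 < p) (hx : 0 < x) :
    ∫⁻ l in Ioi (0 : ℝ), ENNReal.ofReal (l ^ p * (x * Real.exp (-l * x))) =
      ENNReal.ofReal (Real.Gamma (p + 1)) * ENNReal.ofReal (x ^ (-p)) := by
  have hΓ : 0 < Real.Gamma (p + 1) := Real.Gamma_pos_of_pos (by linarith)
  have hval : ∫ l in Ioi (0 : ℝ), l ^ p * (x * Real.exp (-l * x)) =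
      Real.Gamma (p + 1) * x ^ (-p) := by
    have h := Real.integral_rpow_mul_exp_neg_mul_Ioi (a := p + 1) (r := x) (by linarith) hx
    rw [add_sub_cancel_right] at h
    calc ∫ l in Ioi (0 : ℝ), l ^ p * (x * Real.exp (-l * x))
        = ∫ l in Ioi (0 : ℝ), x * (l ^ p * Real.exp (-(x * l))) := by
          congr 1 with l
          rw [show -l * x = -(x * l) by ring]
          ring
      _ = Real.Gamma (p + 1) * x ^ (-p) := by
          rw [integral_const_mul, h, one_div, Real.inv_rpow hx.le, ← Real.rpow_neg hx.le,
            show -(p + 1) = -p - 1 by ring, Real.rpow_sub_one hx.ne']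
          field_simp
  have hpos : 0 < Real.Gamma (p + 1) * x ^ (-p) := mul_pos hΓ (Real.rpow_pos_of_pos hx _)
  rw [← ENNReal.ofReal_mul hΓ.le, ← hval, ofReal_integral_eq_lintegral_ofReal]
  · exact Integrable.of_integral_ne_zero (hval ▸ hpos.ne')
  · filter_upwards [ae_restrict_mem measurableSet_Ioi] with l hl
    have hl : 0 < l := hl
    positivity

/-- If `e^{-φ}` is the Laplace transform of a measure on `(0,∞)`, its derivative is obtained by
differentiating under the integral sign. -/
lemma lintegral_mul_exp_neg_mul_eq_deriv {φ : ℝ → ℝ} {μ : Measure ℝ}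
    (hsupp : ∀ᵐ x ∂μ, 0 < x)
    (hlaplace : ∀ l : ℝ, 0 ≤ l → ∫ x, Real.exp (-l * x) ∂μ = Real.exp (-φ l))
    {l : ℝ} (hl : 0 < l) (hdiff : DifferentiableAt ℝ φ l) :
    ∫⁻ x, ENNReal.ofReal (x * Real.exp (-l * x)) ∂μ =
      ENNReal.ofReal (deriv φ l * Real.exp (-φ l)) := by
  have hsub : Iio 0 ⊆ ProbabilityTheory.integrableExpSet id μ := fun t ht =>
    Integrable.of_integral_ne_zero (by
      have h := hlaplace (-t) (neg_nonneg.2 (le_of_lt ht))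
      rw [neg_neg] at h
      simpa only [id] using h ▸ (Real.exp_pos _).ne')
  have hmem : -l ∈ interior (ProbabilityTheory.integrableExpSet id μ) :=
    interior_maximal hsub isOpen_Iio (neg_lt_zero.2 hl)
  have hmgf := (ProbabilityTheory.hasDerivAt_mgf hmem).comp l (hasDerivAt_neg l)
  have hexp := hdiff.hasDerivAt.neg.exp
  have heq : (ProbabilityTheory.mgf id μ ∘ fun t => -t) =ᶠ[nhds l] fun t => Real.exp (-φ t) := by
    filter_upwards [Ioi_mem_nhds hl] with t ht
    exact hlaplace t (le_of_lt ht)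
  have hval : ∫ x, x * Real.exp (-l * x) ∂μ = deriv φ l * Real.exp (-φ l) := by
    have h := hmgf.unique (hexp.congr_of_eventuallyEq heq)
    simp only [id] at h
    linear_combination -h
  rw [← hval, ofReal_integral_eq_lintegral_ofReal]
  · simpa using ProbabilityTheory.integrable_pow_mul_exp_of_mem_interior_integrableExpSet hmem 1
  · filter_upwards [hsupp] with x hx
    positivity

/-- Let `φ : [0,∞) → [0,∞)` be a strictly increasing bijection,
differentiable on `(0,∞)`, with `φ(0) = 0`, and let `Ψ` be its inverse. Let `μ` be a Borel
probability measure on `(0,∞)` with `∫ e^{−λx} μ(dx) = e^{−φ(λ)}` for all `λ ≥ 0`. Then for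
every `p > −1` such that `x ↦ e^{−x} Ψ(x)^p` is integrable on `(0,∞)`, one has
`∫ x^{−p} μ(dx) = (1/Γ(p+1)) ∫₀^∞ e^{−x} Ψ(x)^p dx`. -/
theorem stmt_19 (φ Ψ : ℝ → ℝ)
    (hmono : StrictMonoOn φ (Ici 0)) (hbij : Set.BijOn φ (Ici 0) (Ici 0))
    (hdiff : DifferentiableOn ℝ φ (Ioi 0)) (h0 : φ 0 = 0)
    (hinv : Set.InvOn Ψ φ (Ici 0) (Ici 0))
    (μ : Measure ℝ) [IsProbabilityMeasure μ] (hsupp : μ {x | x ≤ 0} = 0)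
    (hlaplace : ∀ l : ℝ, 0 ≤ l → ∫ x, Real.exp (-l * x) ∂μ = Real.exp (-φ l))
    (p : ℝ) (hp : -1 < p)
    (hint : IntegrableOn (fun x => Real.exp (-x) * Ψ x ^ p) (Ioi 0)) :
    ∫⁻ x, ENNReal.ofReal (x ^ (-p)) ∂μ =
      ENNReal.ofReal ((1 / Real.Gamma (p + 1)) * ∫ x in Ioi (0 : ℝ), Real.exp (-x) * Ψ x ^ p) := by
  have hpos : ∀ᵐ x ∂μ, 0 < x := by
    rw [ae_iff]
    simpa using hsupp
  have hφpos : ∀ l, 0 < l → 0 < φ l := fun l hl =>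
    h0 ▸ hmono self_mem_Ici (mem_Ici.2 hl.le) hl
  have himage : Set.image φ (Ioi 0) = Ioi 0 := by
    ext u
    constructor
    · rintro ⟨l, hl, rfl⟩
      exact hφpos l hl
    · intro hu
      obtain ⟨l, hl, rfl⟩ := hbij.surjOn (mem_Ici.2 (le_of_lt hu))
      refine ⟨l, mem_Ioi.2 (lt_of_le_of_ne hl ?_), rfl⟩
      rintro rfl
      exact (ne_of_gt hu) h0
  have hΨ : ∀ u, 0 < u → 0 ≤ Ψ u := fun u hu => by
    obtain ⟨l, hl, rfl⟩ := hbij.surjOn (mem_Ici.2 hu.le)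
    rwa [hinv.1 hl]
  have hd : ∀ l, 0 < l → DifferentiableAt ℝ φ l := fun l hl =>
    hdiff.differentiableAt (Ioi_mem_nhds hl)
  have hΓ : 0 < Real.Gamma (p + 1) := Real.Gamma_pos_of_pos (by linarith)
  have hmul : ENNReal.ofReal (Real.Gamma (p + 1)) * ∫⁻ x, ENNReal.ofReal (x ^ (-p)) ∂μ =
      ENNReal.ofReal (∫ x in Ioi (0 : ℝ), Real.exp (-x) * Ψ x ^ p) := by
    calc ENNReal.ofReal (Real.Gamma (p + 1)) * ∫⁻ x, ENNReal.ofReal (x ^ (-p)) ∂μ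
        = ∫⁻ x, (∫⁻ l in Ioi (0 : ℝ), ENNReal.ofReal (l ^ p * (x * Real.exp (-l * x)))) ∂μ := by
          rw [← lintegral_const_mul _ (by fun_prop)]
          refine lintegral_congr_ae ?_
          filter_upwards [hpos] with x hx
          exact (lintegral_rpow_mul_mul_exp_neg_mul hp hx).symm
      _ = ∫⁻ l in Ioi (0 : ℝ), ∫⁻ x, ENNReal.ofReal (l ^ p * (x * Real.exp (-l * x))) ∂μ :=
          lintegral_lintegral_swap (by unfold Function.uncurry; fun_prop)
      _ = ∫⁻ l in Ioi (0 : ℝ), ENNReal.ofReal |deriv φ l| *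
            ENNReal.ofReal (Real.exp (-φ l) * Ψ (φ l) ^ p) := by
          refine setLIntegral_congr_fun measurableSet_Ioi fun l hl => ?_
          have hl : 0 < l := hl
          have hlp : 0 ≤ l ^ p := Real.rpow_nonneg hl.le _
          have hderiv : 0 ≤ deriv φ l := by
            rw [← derivWithin_of_mem_nhds (Ici_mem_nhds hl)]
            exact hmono.monotoneOn.derivWithin_nonneg
          simp_rw [ENNReal.ofReal_mul hlp]
          rw [lintegral_const_mul _ (by fun_prop),
            lintegral_mul_exp_neg_mul_eq_deriv hpos hlaplace hl (hd l hl),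
            hinv.1 (mem_Ici.2 hl.le), abs_of_nonneg hderiv, ← ENNReal.ofReal_mul hlp,
            ← ENNReal.ofReal_mul hderiv]
          ring_nf
      _ = ∫⁻ u in Ioi (0 : ℝ), ENNReal.ofReal (Real.exp (-u) * Ψ u ^ p) := by
          conv_rhs => rw [← himage]
          exact (lintegral_image_eq_lintegral_abs_deriv_mul measurableSet_Ioi
            (fun l hl => (hd l hl).hasDerivAt.hasDerivWithinAt)
            (hbij.injOn.mono Ioi_subset_Ici_self)
            fun u => ENNReal.ofReal (Real.exp (-u) * Ψ u ^ p)).symm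
      _ = ENNReal.ofReal (∫ x in Ioi (0 : ℝ), Real.exp (-x) * Ψ x ^ p) := by
          refine (ofReal_integral_eq_lintegral_ofReal hint ?_).symm
          filter_upwards [ae_restrict_mem measurableSet_Ioi] with u hu
          exact mul_nonneg (Real.exp_pos _).le (Real.rpow_nonneg (hΨ u hu) _)
  rw [ENNReal.ofReal_mul (by positivity), ← hmul, ← mul_assoc,
    ← ENNReal.ofReal_mul (by positivity), one_div_mul_cancel hΓ.ne', ENNReal.ofReal_one, one_mul]
end
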